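/- arXiv:1402.6537 — 2 statements merged into one kernel-verified Lean document; each statement's English description precedes it below -/
import Mathlib

section
/- Define α_Δt(q,q') = V(q') − V(q) + (1/(4Δt))(|q − q' + Δt∇V(q')|² − |q' − q + Δt∇V(q)|²), so that R_Δt(q,q') = min(1, e^{−α_Δt(q,q')}). Then there exist C ≥ 0 and Δt* > 0 such that for all 0 < Δt ≤ Δt*, all q ∈ ℝⁿ and all G ∈ ℝⁿ, |α_Δt(q, q − Δt∇V(q) + √(2Δt)G) − Δt^{3/2} ξ(q,G)| ≤ C Δt² (1 + |G|⁶). -/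
/-!
Write `h = q' - q`. Expanding the squares,
`α = V(q') - V(q) - ½⟪h, ∇V(q) + ∇V(q')⟫ + (Δt/4) (|∇V(q')|² - |∇V(q)|²)`.
The first part is the error of the trapezoidal rule for `t ↦ V(q + t h)`, which is
`-D³V(q)(h,h,h)/12` up to `O(|h|⁴)` (`trapezoid_error`); the second one is
`(Δt/2) ⟪∇V(q), ∇²V(q) h⟫` up to `O(Δt |h|²)`, by a first-order Taylor expansion of `|∇V|²`
(`taylor_one_error`). Since `h = √(2Δt) G - Δt ∇V(q)`, replacing `h` by `√(2Δt) G` in the leading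
terms costs `O(Δt²)`, and what is left is `Δt^{3/2} ξ(q,G)`. The remainders are uniform in `q`
because a smooth periodic function has bounded derivatives of every order
(`exists_bound_iteratedFDeriv`).
-/

open MeasureTheory RealInnerProductSpace

noncomputable section

abbrev En (n : ℕ) := EuclideanSpace ℝ (Fin n)

/-- Gaussian proposal density of the Euler–Maruyama scheme. -/
def Tker {n : ℕ} (V : En n → ℝ) (dt : ℝ) (q q' : En n) : ℝ :=
  (4 * Real.pi * dt) ^ (-(n : ℝ) / 2) *
    Real.exp (-‖q' - q + dt • gradient V q‖ ^ 2 / (4 * dt))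

/-- Metropolis acceptance probability. -/
def Rk {n : ℕ} (V : En n → ℝ) (dt : ℝ) (q q' : En n) : ℝ :=
  min 1 (Real.exp (-V q') * Tker V dt q' q / (Real.exp (-V q) * Tker V dt q q'))

/-- proposal move -/
def propMove {n : ℕ} (V : En n → ℝ) (dt : ℝ) (q g : En n) : En n :=
  q - dt • gradient V q + Real.sqrt (2 * dt) • g

def xi {n : ℕ} (V : En n → ℝ) (q g : En n) : ℝ :=
  -(Real.sqrt 2 / 6) * iteratedFDeriv ℝ 3 V q (fun _ => g) +
    (Real.sqrt 2 / 2) * ⟪gradient V q, fderiv ℝ (gradient V) q g⟫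

def xiPlus {n : ℕ} (V : En n → ℝ) (q g : En n) : ℝ := max (xi V q g) 0

/-- standard Gaussian measure on ℝⁿ -/
def gauss (n : ℕ) : Measure (En n) :=
  volume.withDensity fun g =>
    ENNReal.ofReal ((2 * Real.pi) ^ (-(n : ℝ) / 2) * Real.exp (-‖g‖ ^ 2 / 2))

/-- fundamental domain of the torus -/
def Box (n : ℕ) (L : ℝ) : Set (En n) := {q | ∀ i, q i ∈ Set.Ico (0 : ℝ) L}

/-- integral with respect to the Gibbs measure μ on the torus M -/
def muInt {n : ℕ} (V : En n → ℝ) (L : ℝ) (f : En n → ℝ) : ℝ :=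
  (∫ q in Box n L, Real.exp (-V q))⁻¹ * ∫ q in Box n L, f q * Real.exp (-V q)

/-- Laplacian -/
def lap {n : ℕ} (ψ : En n → ℝ) (q : En n) : ℝ :=
  ∑ i, iteratedFDeriv ℝ 2 ψ q (fun _ => EuclideanSpace.single i (1 : ℝ))

/-- generator of the overdamped Langevin dynamics -/
def gen {n : ℕ} (V ψ : En n → ℝ) (q : En n) : ℝ :=
  -⟪gradient V q, gradient ψ q⟫ + lap ψ q

/-- MALA transition operator on periodic functions -/
def Pmala {n : ℕ} (V : En n → ℝ) (dt : ℝ) (f : En n → ℝ) (q : En n) : ℝ :=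
  f q + ∫ q', Rk V dt q q' * Tker V dt q q' * (f q' - f q)

/-- the operator D₁ -/
def D1op {n : ℕ} (V ψ : En n → ℝ) (q : En n) : ℝ :=
  2 * ∑ i, ∑ j, (iteratedFDeriv ℝ 2 V q ![EuclideanSpace.single i (1:ℝ), EuclideanSpace.single j (1:ℝ)]) *
      (iteratedFDeriv ℝ 2 ψ q ![EuclideanSpace.single i (1:ℝ), EuclideanSpace.single j (1:ℝ)])
    + ⟪gradient (fun x => lap V x) q, gradient ψ q⟫
    - ⟪gradient V q, fderiv ℝ (gradient V) q (gradient ψ q)⟫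

/-- the operator D₂ -/
def D2op {n : ℕ} (V ψ : En n → ℝ) (q : En n) : ℝ :=
  -Real.sqrt 2 * ⟪∫ g, xiPlus V q g • g ∂(gauss n), gradient ψ q⟫

/-- the operator A appearing in the expansion of the MALA evolution operator -/
def Aop {n : ℕ} (V ψ : En n → ℝ) (q : En n) : ℝ :=
  (gen V (gen V ψ) q + D1op V ψ q + D2op V ψ q) / 2

/-- Metropolized increment -/
def deltaInc {n : ℕ} (V : En n → ℝ) (dt : ℝ) (q g : En n) (u : ℝ) : En n :=
  if u ≤ Rk V dt q (propMove V dt q g) then (-dt) • gradient V q + Real.sqrt (2 * dt) • g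
  else 0

/-- expectation over G (std Gaussian) and U (uniform on [0,1]) of the increment -/
def EguDelta {n : ℕ} (V : En n → ℝ) (dt : ℝ) (q : En n) : En n :=
  ∫ g, (∫ u in Set.Icc (0 : ℝ) 1, deltaInc V dt q g u) ∂(gauss n)


def alphaMH {n : ℕ} (V : En n → ℝ) (dt : ℝ) (q q' : En n) : ℝ :=
  V q' - V q + (1 / (4 * dt)) *
    (‖q - q' + dt • gradient V q'‖ ^ 2 - ‖q' - q + dt • gradient V q‖ ^ 2)

/-! ### Boundedness of periodic functions -/

lemma exists_bound_of_periodic {n : ℕ} {F : Type*} [NormedAddCommGroup F] {L : ℝ} (hL : 0 < L)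
    (f : En n → F) (hf : Continuous f)
    (hper : ∀ i : Fin n, Function.Periodic f (L • EuclideanSpace.single i (1 : ℝ))) :
    ∃ K, ∀ q, ‖f q‖ ≤ K := by
  obtain ⟨K, hK⟩ := (isCompact_closedBall (0 : En n) (n * L)).exists_bound_of_continuousOn
    hf.continuousOn
  refine ⟨K, fun q => ?_⟩
  have hsum : ∀ (m : Fin n → ℤ) (s : Finset (Fin n)),
      Function.Periodic f (∑ i ∈ s, m i • (L • EuclideanSpace.single i (1 : ℝ))) := by
    intro m s
    induction s using Finset.induction_on with
    | empty => intro x; simp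
    | insert a s ha ih =>
      rw [Finset.sum_insert ha]
      exact ((hper a).zsmul (m a)).add_period ih
  -- translate `q` into the fundamental cell by the lattice vector `-∑ ⌊q i / L⌋ L eᵢ`
  have key := hsum (fun i => -⌊q i / L⌋) Finset.univ q
  rw [← key]
  apply hK
  rw [mem_closedBall_zero_iff]
  set y : En n := q + ∑ i, (-⌊q i / L⌋) • (L • EuclideanSpace.single i (1 : ℝ)) with hy
  have hyi : ∀ i, ‖y i‖ ≤ L := by
    intro i
    have : y i = L * Int.fract (q i / L) := by
      simp only [hy, PiLp.add_apply, WithLp.ofLp_sum, Finset.sum_apply]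
      rw [Finset.sum_eq_single i]
      · rw [Int.fract, mul_sub, mul_div_cancel₀ _ hL.ne']
        simp
        ring
      · intro j _ hj
        simp [hj.symm]
      · simp
    rw [this, Real.norm_eq_abs, abs_of_nonneg (mul_nonneg hL.le (Int.fract_nonneg _))]
    nlinarith [Int.fract_lt_one (q i / L)]
  have hdec : y = ∑ i, y i • EuclideanSpace.single i (1 : ℝ) := by
    ext j
    simp [Finset.sum_apply, Pi.single_apply]
  calc ‖y‖ = ‖∑ i, y i • EuclideanSpace.single i (1 : ℝ)‖ := by rw [← hdec]
    _ ≤ ∑ i : Fin n, L := by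
        refine norm_sum_le_of_le _ fun i _ => ?_
        rw [norm_smul]
        simpa using hyi i
    _ = n * L := by simp

lemma exists_bound_iteratedFDeriv {n : ℕ} {L : ℝ} (hL : 0 < L) (V : En n → ℝ)
    (hV : ContDiff ℝ (⊤ : ℕ∞) V)
    (hper : ∀ i : Fin n, Function.Periodic V (L • EuclideanSpace.single i (1 : ℝ))) (k : ℕ) :
    ∃ K, ∀ q, ‖iteratedFDeriv ℝ k V q‖ ≤ K := by
  refine exists_bound_of_periodic hL _ (hV.continuous_iteratedFDeriv (by exact_mod_cast le_top)) ?_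
  intro i q
  rw [← iteratedFDeriv_comp_add_right]
  congr 1
  exact funext (hper i)

/-! ### Taylor estimates along a segment -/

/-- The `k`-th derivative of `t ↦ V (q + t h)` is `t ↦ Dᵏ V (q + t h) (h, …, h)`. -/
lemma hasDerivAt_iteratedFDeriv_line {n : ℕ} (V : En n → ℝ) (hV : ContDiff ℝ (⊤ : ℕ∞) V)
    (q h : En n) (k : ℕ) (t : ℝ) :
    HasDerivAt (fun t : ℝ => iteratedFDeriv ℝ k V (q + t • h) (fun _ => h))
      (iteratedFDeriv ℝ (k + 1) V (q + t • h) (fun _ => h)) t := by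
  have h1 : HasDerivAt (fun t : ℝ => q + t • h) h t := by
    simpa using ((hasDerivAt_id t).smul_const h).const_add q
  have h2 : HasFDerivAt (iteratedFDeriv ℝ k V) (fderiv ℝ (iteratedFDeriv ℝ k V) (q + t • h))
      (q + t • h) :=
    ((hV.differentiable_iteratedFDeriv (by exact_mod_cast ENat.natCast_lt_top k)) _).hasFDerivAt
  have h3 := h2.comp_hasDerivAt t h1
  have h4 := ((ContinuousMultilinearMap.apply ℝ (fun _ : Fin k => En n) ℝ
    (fun _ => h)).hasFDerivAt).comp_hasDerivAt t h3
  rw [iteratedFDeriv_succ_apply_left]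
  exact h4

lemma abs_sub_le_of_deriv_le {F F' : ℝ → ℝ} {B : ℝ} (hF : ∀ t, HasDerivAt F (F' t) t)
    (hB : ∀ t ∈ Set.Icc (0 : ℝ) 1, |F' t| ≤ B) (hB0 : 0 ≤ B) {t : ℝ}
    (ht : t ∈ Set.Icc (0 : ℝ) 1) :
    |F t - F 0| ≤ B := by
  have := (convex_Icc (0 : ℝ) 1).norm_image_sub_le_of_norm_hasDerivWithin_le
    (fun x _ => (hF x).hasDerivWithinAt) hB (Set.left_mem_Icc.2 zero_le_one) ht
  simp only [Real.norm_eq_abs, sub_zero] at this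
  rw [abs_of_nonneg ht.1] at this
  nlinarith [ht.2]

/-- Trapezoidal rule with its leading error term. The constant `2` is not optimal. -/
lemma trapezoid_error {a : ℕ → ℝ → ℝ} (ha : ∀ k t, HasDerivAt (a k) (a (k + 1) t) t) {B : ℝ}
    (hB0 : 0 ≤ B) (hB : ∀ t ∈ Set.Icc (0 : ℝ) 1, |a 4 t| ≤ B) :
    |a 0 1 - a 0 0 - (a 1 0 + a 1 1) / 2 + a 3 0 / 12| ≤ 2 * B := by
  have h3 : ∀ t ∈ Set.Icc (0 : ℝ) 1, |a 3 t - a 3 0| ≤ B := fun t ht =>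
    abs_sub_le_of_deriv_le (ha 3) hB hB0 ht
  have h2 : ∀ t ∈ Set.Icc (0 : ℝ) 1, |a 2 t - a 2 0 - t * a 3 0| ≤ B := fun t ht => by
    have hd : ∀ t, HasDerivAt (fun t => a 2 t - t * a 3 0) (a 3 t - a 3 0) t := fun t => by
      simpa using (ha 2 t).fun_sub ((hasDerivAt_id t).mul_const (a 3 0))
    have := abs_sub_le_of_deriv_le hd h3 hB0 ht
    convert this using 2
    ring
  have h1 : ∀ t ∈ Set.Icc (0 : ℝ) 1,
      |a 1 t - a 1 0 - t * a 2 0 - t ^ 2 / 2 * a 3 0| ≤ B := fun t ht => by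
    have hd : ∀ t, HasDerivAt (fun t => a 1 t - t * a 2 0 - t ^ 2 / 2 * a 3 0)
        (a 2 t - a 2 0 - t * a 3 0) t := fun t => by
      have := ((ha 1 t).fun_sub ((hasDerivAt_id t).mul_const (a 2 0))).fun_sub
        (((hasDerivAt_pow 2 t).div_const 2).mul_const (a 3 0))
      exact this.congr_deriv (by simp)
    have := abs_sub_le_of_deriv_le hd h2 hB0 ht
    convert this using 2
    ring
  have h0 : |a 0 1 - a 0 0 - a 1 0 - a 2 0 / 2 - a 3 0 / 6| ≤ B := by
    have hd : ∀ t, HasDerivAt (fun t => a 0 t - t * a 1 0 - t ^ 2 / 2 * a 2 0 - t ^ 3 / 6 * a 3 0)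
        (a 1 t - a 1 0 - t * a 2 0 - t ^ 2 / 2 * a 3 0) t := fun t => by
      have := (((ha 0 t).fun_sub ((hasDerivAt_id t).mul_const (a 1 0))).fun_sub
        (((hasDerivAt_pow 2 t).div_const 2).mul_const (a 2 0))).fun_sub
        (((hasDerivAt_pow 3 t).div_const 6).mul_const (a 3 0))
      exact this.congr_deriv (by norm_num; left; ring)
    have := abs_sub_le_of_deriv_le hd h1 hB0 (Set.right_mem_Icc.2 zero_le_one)
    convert this using 2
    ring
  have h1' := h1 1 (Set.right_mem_Icc.2 zero_le_one)
  rw [abs_le] at h0 h1' ⊢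
  constructor <;> linarith [h0.1, h0.2, h1'.1, h1'.2]

lemma taylor_one_error {a : ℕ → ℝ → ℝ} (ha : ∀ k t, HasDerivAt (a k) (a (k + 1) t) t) {B : ℝ}
    (hB0 : 0 ≤ B) (hB : ∀ t ∈ Set.Icc (0 : ℝ) 1, |a 2 t| ≤ B) :
    |a 0 1 - a 0 0 - a 1 0| ≤ B := by
  have h1 : ∀ t ∈ Set.Icc (0 : ℝ) 1, |a 1 t - a 1 0| ≤ B := fun t ht =>
    abs_sub_le_of_deriv_le (ha 1) hB hB0 ht
  have hd : ∀ t, HasDerivAt (fun t => a 0 t - t * a 1 0) (a 1 t - a 1 0) t := fun t => by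
    simpa using (ha 0 t).fun_sub ((hasDerivAt_id t).mul_const (a 1 0))
  have := abs_sub_le_of_deriv_le hd h1 hB0 (Set.right_mem_Icc.2 zero_le_one)
  convert this using 2
  ring

lemma abs_apply_diag_le {n k : ℕ} {V : En n → ℝ} {K : ℝ} {x : En n}
    (hK : ‖iteratedFDeriv ℝ k V x‖ ≤ K) (h : En n) :
    |iteratedFDeriv ℝ k V x (fun _ => h)| ≤ K * ‖h‖ ^ k := by
  have := (iteratedFDeriv ℝ k V x).le_of_opNorm_le hK (fun _ => h)
  simpa using this

/-! ### The gradient and its squared norm -/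

lemma contDiff_gradient {n : ℕ} {V : En n → ℝ} (hV : ContDiff ℝ (⊤ : ℕ∞) V) :
    ContDiff ℝ (⊤ : ℕ∞) (gradient V) := by
  have h1 : ContDiff ℝ (⊤ : ℕ∞) (fderiv ℝ V) := hV.fderiv_right (by simp)
  exact (InnerProductSpace.toDual ℝ (En n)).symm.toContinuousLinearEquiv.contDiff.comp h1

lemma inner_gradient {n : ℕ} (V : En n → ℝ) (x h : En n) :
    ⟪gradient V x, h⟫ = fderiv ℝ V x h := by
  simp [gradient]

lemma periodic_gradient {n : ℕ} {V : En n → ℝ} {c : En n} (hc : Function.Periodic V c) :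
    Function.Periodic (gradient V) c := by
  intro x
  unfold gradient
  rw [← fderiv_comp_add_right]
  congr 2
  exact funext hc

lemma fderiv_normSq_gradient {n : ℕ} {V : En n → ℝ} (hV : ContDiff ℝ (⊤ : ℕ∞) V) (q h : En n) :
    fderiv ℝ (fun x => ‖gradient V x‖ ^ 2) q h =
      2 * ⟪gradient V q, fderiv ℝ (gradient V) q h⟫ := by
  have hd : DifferentiableAt ℝ (gradient V) q :=
    ((contDiff_gradient hV).differentiable (by simp)) q
  rw [(hd.hasFDerivAt.norm_sq).fderiv]
  simp

/-- Expansion of the squares in `α`. -/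
lemma alphaMH_eq {n : ℕ} (V : En n → ℝ) {dt : ℝ} (hdt : 0 < dt) (q h : En n) :
    alphaMH V dt q (q + h) = V (q + h) - V q - (fderiv ℝ V q h + fderiv ℝ V (q + h) h) / 2
      + dt / 4 * (‖gradient V (q + h)‖ ^ 2 - ‖gradient V q‖ ^ 2) := by
  rw [← inner_gradient, ← inner_gradient]
  unfold alphaMH
  have e1 : q - (q + h) + dt • gradient V (q + h) = dt • gradient V (q + h) - h := by abel
  have e2 : q + h - q + dt • gradient V q = dt • gradient V q + h := by abel
  rw [e1, e2, norm_sub_sq_real, norm_add_sq_real, norm_smul, norm_smul, inner_smul_left,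
    inner_smul_left, Real.norm_of_nonneg hdt.le]
  simp only [conj_trivial]
  field_simp
  ring

lemma rpow_three_halves {dt : ℝ} (hdt : 0 < dt) :
    dt ^ ((3 : ℝ) / 2) = dt * √dt := by
  rw [show (3 : ℝ) / 2 = 1 + 1 / 2 by norm_num, Real.rpow_add hdt, Real.rpow_one,
    Real.sqrt_eq_rpow]

/-- The four remainders, collected into a multiple of `Δt² (1 + |G|⁶)`. -/
lemma remainder_bound {K x dt s H : ℝ} (hK : 1 ≤ K) (hx : 0 ≤ x) (hdt : 0 < dt)
    (hs2 : s ^ 2 = 2 * dt) (hH0 : 0 ≤ H) (hH : H ≤ s * (x + K)) :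
    2 * (K * H ^ 4) + K * 3 * (s * (x + K)) ^ 2 * (dt * K) / 12 + dt / 4 * (K * H ^ 2)
      + dt ^ 2 / 4 * (K * K) ≤ 160 * K ^ 6 * dt ^ 2 * (1 + x ^ 6) := by
  set r := x + K with hr
  have hr1 : 1 ≤ r := by linarith
  have hH2 : H ^ 2 ≤ 2 * dt * r ^ 2 := by
    rw [← hs2, ← mul_pow]; exact pow_le_pow_left₀ hH0 hH 2
  have hH4 : H ^ 4 ≤ 4 * dt ^ 2 * r ^ 4 := by
    have := pow_le_pow_left₀ (sq_nonneg H) hH2 2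
    calc H ^ 4 = (H ^ 2) ^ 2 := by ring
      _ ≤ _ := this
      _ = _ := by ring
  have hr2 : r ^ 2 ≤ r ^ 4 := pow_le_pow_right₀ hr1 (by norm_num)
  have hr0 : 1 ≤ r ^ 4 := one_le_pow₀ hr1
  have hKK : K ≤ K ^ 2 := by nlinarith
  have step1 : 2 * (K * H ^ 4) + K * 3 * (s * r) ^ 2 * (dt * K) / 12 + dt / 4 * (K * H ^ 2)
      + dt ^ 2 / 4 * (K * K) ≤ dt ^ 2 * (10 * K ^ 2 * r ^ 4) := by
    have a1 : 2 * (K * H ^ 4) ≤ dt ^ 2 * (8 * (K ^ 2 * r ^ 4)) := by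
      calc 2 * (K * H ^ 4) ≤ 2 * (K ^ 2 * (4 * dt ^ 2 * r ^ 4)) := by gcongr
        _ = _ := by ring
    have a2 : K * 3 * (s * r) ^ 2 * (dt * K) / 12 ≤ dt ^ 2 * (K ^ 2 * r ^ 4) * (1 / 2) := by
      rw [mul_pow, hs2]
      calc K * 3 * (2 * dt * r ^ 2) * (dt * K) / 12 = dt ^ 2 * (K ^ 2 * r ^ 2) * (1 / 2) := by ring
        _ ≤ _ := by gcongr
    have a3 : dt / 4 * (K * H ^ 2) ≤ dt ^ 2 * (K ^ 2 * r ^ 4) * (1 / 2) := by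
      calc dt / 4 * (K * H ^ 2) ≤ dt / 4 * (K ^ 2 * (2 * dt * r ^ 4)) := by
            gcongr; exact hH2.trans (by gcongr)
        _ = _ := by ring
    have a4 : dt ^ 2 / 4 * (K * K) ≤ dt ^ 2 * (K ^ 2 * r ^ 4) * (1 / 4) := by
      calc dt ^ 2 / 4 * (K * K) = dt ^ 2 * (K ^ 2 * 1) * (1 / 4) := by ring
        _ ≤ _ := by gcongr
    have a5 : 0 ≤ dt ^ 2 * (K ^ 2 * r ^ 4) := by positivity
    nlinarith
  have hrx : r ≤ K * (1 + x) := by nlinarith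
  have hr4 : r ^ 4 ≤ K ^ 4 * (1 + x) ^ 4 := by
    rw [← mul_pow]; exact pow_le_pow_left₀ (by linarith) hrx 4
  have hx4 : (1 + x) ^ 4 ≤ 16 * (1 + x ^ 6) := by
    have b1 : (1 + x) ^ 4 ≤ 8 * (1 + x ^ 4) := by
      have := add_pow_le (zero_le_one) hx 4
      norm_num at this
      linarith
    have b2 : x ^ 4 ≤ 1 + x ^ 6 := by
      rcases le_total x 1 with h | h
      · have : x ^ 4 ≤ 1 := pow_le_one₀ hx h
        have : 0 ≤ x ^ 6 := by positivity
        linarith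
      · have : x ^ 4 ≤ x ^ 6 := pow_le_pow_right₀ h (by norm_num)
        linarith
    have : 0 ≤ x ^ 6 := by positivity
    linarith
  calc _ ≤ _ := step1
    _ ≤ dt ^ 2 * (10 * K ^ 2 * (K ^ 4 * (16 * (1 + x ^ 6)))) := by
        gcongr
        exact hr4.trans (by gcongr)
    _ = _ := by ring

theorem stmt0 (n : ℕ) (hn : 1 ≤ n) (L : ℝ) (hL : 0 < L)
    (V : En n → ℝ) (hV : ContDiff ℝ (⊤ : ℕ∞) V)
    (hper : ∀ (q : En n) (i : Fin n), V (q + L • EuclideanSpace.single i (1 : ℝ)) = V q) :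
    ∃ C ≥ (0 : ℝ), ∃ dts > (0 : ℝ), ∀ dt : ℝ, 0 < dt → dt ≤ dts → ∀ q g : En n,
      |alphaMH V dt q (propMove V dt q g) - dt ^ ((3 : ℝ) / 2) * xi V q g| ≤
        C * dt ^ 2 * (1 + ‖g‖ ^ 6) := by
  have hperV : ∀ i : Fin n, Function.Periodic V (L • EuclideanSpace.single i (1 : ℝ)) :=
    fun i q => hper q i
  set N : En n → ℝ := fun x => ‖gradient V x‖ ^ 2 with hN
  have hNs : ContDiff ℝ (⊤ : ℕ∞) N := (contDiff_gradient hV).norm_sq ℝ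
  have hNper : ∀ i : Fin n, Function.Periodic N (L • EuclideanSpace.single i (1 : ℝ)) :=
    fun i q => by simp only [hN, periodic_gradient (hperV i) q]
  obtain ⟨K1, hK1⟩ := exists_bound_iteratedFDeriv hL V hV hperV 1
  obtain ⟨K3, hK3⟩ := exists_bound_iteratedFDeriv hL V hV hperV 3
  obtain ⟨K4, hK4⟩ := exists_bound_iteratedFDeriv hL V hV hperV 4
  obtain ⟨M1, hM1⟩ := exists_bound_iteratedFDeriv hL N hNs hNper 1
  obtain ⟨M2, hM2⟩ := exists_bound_iteratedFDeriv hL N hNs hNper 2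
  obtain ⟨K, hK, k1, k3, k4, m1, m2⟩ :
      ∃ K : ℝ, 1 ≤ K ∧ K1 ≤ K ∧ K3 ≤ K ∧ K4 ≤ K ∧ M1 ≤ K ∧ M2 ≤ K := by
    refine ⟨max 1 (max K1 (max K3 (max K4 (max M1 M2)))), ?_⟩
    simp
  replace hK1 := fun q => (hK1 q).trans k1
  replace hK3 := fun q => (hK3 q).trans k3
  replace hK4 := fun q => (hK4 q).trans k4
  replace hM1 := fun q => (hM1 q).trans m1
  replace hM2 := fun q => (hM2 q).trans m2
  have hK0 : 0 ≤ K := by linarith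
  refine ⟨160 * K ^ 6, by positivity, 1, one_pos, fun dt hdt hdt1 q g => ?_⟩
  set s := √(2 * dt) with hs
  have hs0 : 0 ≤ s := Real.sqrt_nonneg _
  have hs2 : s ^ 2 = 2 * dt := Real.sq_sqrt (by positivity)
  have hdts : dt ≤ s := Real.le_sqrt_of_sq_le (by nlinarith)
  have hsq : √2 * √dt = s := by rw [hs, Real.sqrt_mul (by norm_num)]
  have hgrad : ‖gradient V q‖ ≤ K := by
    have h1 : ‖gradient V q‖ = ‖fderiv ℝ V q‖ := by simp [gradient]
    rw [h1, ← norm_iteratedFDeriv_one]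
    exact hK1 q
  set h : En n := s • g - dt • gradient V q with hh
  have hprop : propMove V dt q g = q + h := by
    simp only [propMove, hh]
    abel
  have hsg : ‖s • g‖ = s * ‖g‖ := by rw [norm_smul, Real.norm_of_nonneg hs0]
  have hdg : ‖dt • gradient V q‖ ≤ dt * K := by
    rw [norm_smul, Real.norm_of_nonneg hdt.le]; gcongr
  have hhn : ‖h‖ ≤ s * (‖g‖ + K) := by
    calc ‖h‖ ≤ ‖s • g‖ + ‖dt • gradient V q‖ := norm_sub_le _ _
      _ ≤ s * ‖g‖ + s * K := by rw [hsg]; gcongr; exact hdg.trans (by gcongr)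
      _ = _ := by ring
  have hline0 : ∀ (W : En n → ℝ) (x : En n), iteratedFDeriv ℝ 0 W x (fun _ => h) = W x :=
    fun W x => iteratedFDeriv_zero_apply _
  have hline1 : ∀ (W : En n → ℝ) (x : En n),
      iteratedFDeriv ℝ 1 W x (fun _ => h) = fderiv ℝ W x h :=
    fun W x => iteratedFDeriv_one_apply _
  have T1 := trapezoid_error (hasDerivAt_iteratedFDeriv_line V hV q h)
    (B := K * ‖h‖ ^ 4) (by positivity) (fun t _ => abs_apply_diag_le (hK4 _) h)
  have T2 := taylor_one_error (hasDerivAt_iteratedFDeriv_line N hNs q h)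
    (B := K * ‖h‖ ^ 2) (by positivity) (fun t _ => abs_apply_diag_le (hM2 _) h)
  simp only [hline0, hline1, zero_smul, add_zero, one_smul] at T1 T2
  -- replacing `h` by `s • g` in the cubic form
  have T3 : |iteratedFDeriv ℝ 3 V q (fun _ => h) - s ^ 3 * iteratedFDeriv ℝ 3 V q (fun _ => g)|
      ≤ K * 3 * (s * (‖g‖ + K)) ^ 2 * (dt * K) := by
    have e : s ^ 3 * iteratedFDeriv ℝ 3 V q (fun _ => g)
        = iteratedFDeriv ℝ 3 V q (fun _ => s • g) := by
      have := (iteratedFDeriv ℝ 3 V q).map_smul_univ (fun _ => s) (fun _ => g)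
      simpa using this.symm
    rw [e, ← Real.norm_eq_abs]
    have hm1 : ‖(fun _ : Fin 3 => h)‖ ≤ s * (‖g‖ + K) :=
      (pi_norm_const_le _).trans hhn
    have hm2 : ‖(fun _ : Fin 3 => s • g)‖ ≤ s * (‖g‖ + K) := by
      refine (pi_norm_const_le _).trans ?_
      rw [hsg]; gcongr; linarith
    have hm3 : ‖(fun _ : Fin 3 => h) - (fun _ : Fin 3 => s • g)‖ ≤ dt * K := by
      have : (fun _ : Fin 3 => h) - (fun _ : Fin 3 => s • g)
          = fun _ : Fin 3 => -(dt • gradient V q) := by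
        funext _; simp [hh]
      rw [this]
      exact (pi_norm_const_le _).trans (by rw [norm_neg]; exact hdg)
    refine ((iteratedFDeriv ℝ 3 V q).norm_image_sub_le _ _).trans ?_
    simp only [Fintype.card_fin, Nat.cast_ofNat]
    gcongr
    · exact hK3 q
    · exact max_le hm1 hm2
  have T4 : |fderiv ℝ N q (gradient V q)| ≤ K * K := by
    have := abs_apply_diag_le (hM1 q) (gradient V q)
    rw [iteratedFDeriv_one_apply, pow_one] at this
    exact this.trans (by gcongr)
  have hNh : fderiv ℝ N q h = s * fderiv ℝ N q g - dt * fderiv ℝ N q (gradient V q) := by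
    simp [hh]
  have hNg : fderiv ℝ N q g = 2 * ⟪gradient V q, fderiv ℝ (gradient V) q g⟫ :=
    fderiv_normSq_gradient hV q g
  have hxi : dt ^ ((3 : ℝ) / 2) * xi V q g
      = - (s ^ 3 * iteratedFDeriv ℝ 3 V q (fun _ => g)) / 12 + dt / 4 * (s * fderiv ℝ N q g) := by
    have e3 : s ^ 3 = 2 * dt * s := by rw [← hs2]; ring
    rw [rpow_three_halves hdt, xi, hNg, e3, ← hsq]
    ring
  have hα := alphaMH_eq V hdt q h
  rw [hprop, hxi, hα]
  refine le_trans ?_ (remainder_bound hK (norm_nonneg g) hdt hs2 (norm_nonneg h) hhn)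
  change |_ + dt / 4 * (N (q + h) - N q) - _| ≤ _
  generalize iteratedFDeriv ℝ 3 V q (fun _ => h) = d3h at *
  generalize s ^ 3 * iteratedFDeriv ℝ 3 V q (fun _ => g) = d3g at *
  have T2' := mul_le_mul_of_nonneg_left T2 (show 0 ≤ dt / 4 by positivity)
  have T4' := mul_le_mul_of_nonneg_left T4 (show 0 ≤ dt ^ 2 / 4 by positivity)
  rw [← abs_of_nonneg (show 0 ≤ dt / 4 by positivity), ← abs_mul,
    abs_of_nonneg (show 0 ≤ dt / 4 by positivity)] at T2'
  rw [← abs_of_nonneg (show 0 ≤ dt ^ 2 / 4 by positivity), ← abs_mul,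
    abs_of_nonneg (show 0 ≤ dt ^ 2 / 4 by positivity)] at T4'
  rw [hNh] at T2'
  rw [abs_le] at T1 T2' T3 T4' ⊢
  constructor <;> linarith [T1.1, T1.2, T2'.1, T2'.2, T3.1, T3.2, T4'.1, T4'.2]
end
end

section
/- There exist Δt* > 0, C > 0 and λ > 0 such that for all 0 < Δt ≤ Δt*, all n ∈ ℕ and every bounded measurable L-periodic function f : ℝⁿ → ℝ with ∫_M f dμ = 0, one has ‖P_Δtⁿ f‖_∞ ≤ C e^{−λ n Δt} ‖f‖_∞. -/
/-!
The proof is a Doeblin argument with a minorization that is uniform in the time step.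

Detailed balance gives `e^{-V(q)} R(q,q') T(q,q') = min (e^{-V(q)} T(q,q')) (e^{-V(q')} T(q',q))`.
Expanding the square in the proposal density, its drift contributes
`e^{-⟨∇V(q), q' - q⟩ / 2}`, so by Taylor's formula each of the two fluxes is at least
`e^{-A dt} e^{-(V(q) + V(q')) / 2} h_s(q' - q)`, where `h_s` is the heat kernel at the slightly
shortened time `s = dt / (1 + 2 K dt)` (`Tker_flux_lower`, `ker_lower`). Hence the accepted part of
one step dominates `e^{-A dt}` times the heat semigroup conjugated by `e^{-V/2}`. This bound is
stable under composition: by the semigroup property of the heat kernel (`heat_conv`), `m` steps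
dominate `e^{-A m dt}` times the conjugated heat kernel at time `m s` (`Pmala_iter_lower`). For
`m dt ∈ [1, 2]` the heat kernel is bounded below on the box, so that `P^m g ≥ α μ(g)` for all
periodic `g ≥ 0`, with `α` independent of `dt` (`doeblin`).

Applied to `B ± f` with `μ(f) = 0` and `|f| ≤ B`, this gives `‖P^m f‖ ≤ (1 - α) B`
(`Centred.contract`). Since `μ` is invariant (`Pmala_invariant`) and `P` is a contraction in sup norm
(`Pmala_bound`), the estimate can be iterated over blocks of `m` steps.
-/

open MeasureTheory RealInnerProductSpace

noncomputable section

/-! ### Periodic functions and the period lattice -/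

/-- `L`-periodicity in each coordinate. -/
def Per {n : ℕ} {E : Type*} (L : ℝ) (f : En n → E) : Prop :=
  ∀ (q : En n) (i : Fin n), f (q + L • EuclideanSpace.single i (1 : ℝ)) = f q

/-- The basis `L e₁, …, L eₙ` of `ℝⁿ`, whose integer span is the period lattice. -/
def latBasis (n : ℕ) {L : ℝ} (hL : L ≠ 0) : Module.Basis (Fin n) ℝ (En n) :=
  (EuclideanSpace.basisFun (Fin n) ℝ).toBasis.unitsSMul fun _ => Units.mk0 L hL

lemma latBasis_apply {n : ℕ} {L : ℝ} (hL : L ≠ 0) (i : Fin n) :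
    latBasis n hL i = L • EuclideanSpace.single i (1 : ℝ) := by
  simp [latBasis, Module.Basis.unitsSMul_apply, Units.smul_def]

lemma box_eq {n : ℕ} {L : ℝ} (hL : 0 < L) :
    Box n L = ZSpan.fundamentalDomain (latBasis n hL.ne') := by
  ext q
  simp only [Box, Set.mem_ofPred_eq, ZSpan.mem_fundamentalDomain, latBasis,
    Module.Basis.repr_unitsSMul, Set.mem_Ico]
  refine forall_congr' fun i => ?_
  have h : (EuclideanSpace.basisFun (Fin n) ℝ).toBasis.repr q i = q i := by simp
  rw [h, Units.smul_def, smul_eq_mul, Units.val_inv_eq_inv_val, Units.val_mk0, inv_mul_eq_div]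
  rw [le_div_iff₀ hL, div_lt_iff₀ hL]
  simp

lemma box_measurable {n : ℕ} {L : ℝ} (hL : 0 < L) : MeasurableSet (Box n L) := by
  rw [box_eq hL]; exact ZSpan.fundamentalDomain_measurableSet _

lemma box_bounded {n : ℕ} {L : ℝ} (hL : 0 < L) : Bornology.IsBounded (Box n L) := by
  rw [box_eq hL]; exact ZSpan.fundamentalDomain_isBounded _

lemma box_volume_lt_top {n : ℕ} {L : ℝ} (hL : 0 < L) : volume (Box n L) < ⊤ :=
  (box_bounded hL).measure_lt_top

lemma box_volume_ne_zero {n : ℕ} {L : ℝ} (hL : 0 < L) : volume (Box n L) ≠ 0 := by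
  rw [box_eq hL]; exact ZSpan.measure_fundamentalDomain_ne_zero _

lemma Per.lattice {n : ℕ} {E : Type*} {L : ℝ} (hL : 0 < L) {f : En n → E} (hf : Per L f)
    {v : En n} (hv : v ∈ Submodule.span ℤ (Set.range (latBasis n hL.ne'))) (q : En n) :
    f (q + v) = f q := by
  induction hv using Submodule.span_induction generalizing q with
  | mem x hx =>
    obtain ⟨i, rfl⟩ := hx
    rw [latBasis_apply]; exact hf q i
  | zero => simp
  | add x y _ _ hx hy => rw [← add_assoc, hy, hx]
  | smul a x _ hx =>
    induction a using Int.induction_on generalizing q with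
    | zero => simp
    | succ k ih => rw [add_smul, one_smul, ← add_assoc, hx, ih]
    | pred k ih =>
      rw [← ih q, ← hx (q + (-(k : ℤ) - 1) • x)]
      congr 1
      rw [sub_smul, one_smul]; abel

/-- Every point of `ℝⁿ` is congruent to a point of the box modulo the period lattice. -/
lemma exists_box {n : ℕ} {L : ℝ} (hL : 0 < L) (q : En n) :
    ∃ p ∈ Box n L, ∀ {E : Type} (f : En n → E), Per L f → f q = f p := by
  obtain ⟨v, hv, -⟩ := ZSpan.exist_unique_vadd_mem_fundamentalDomain (latBasis n hL.ne') q
  refine ⟨v +ᵥ q, by rwa [box_eq hL], fun f hf => ?_⟩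
  rw [Submodule.vadd_def, vadd_eq_add, add_comm, hf.lattice hL v.2]

lemma Per.bounded {n : ℕ} {E : Type} [NormedAddCommGroup E] {L : ℝ} (hL : 0 < L) {f : En n → E}
    (hf : Per L f) (hc : Continuous f) : ∃ C > 0, ∀ q, ‖f q‖ ≤ C := by
  obtain ⟨C, hC⟩ := (box_bounded (n := n) hL).isCompact_closure.exists_bound_of_continuousOn
    hc.continuousOn
  refine ⟨max C 1, by positivity, fun q => ?_⟩
  obtain ⟨p, hp, h⟩ := exists_box hL q
  rw [h f hf]
  exact (hC p (subset_closure hp)).trans (le_max_left _ _)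

/-- The integral of a periodic function over the box is invariant under translation of the
function. -/
lemma Per.setIntegral_shift {n : ℕ} {L : ℝ} (hL : 0 < L) {f : En n → ℝ} (hf : Per L f)
    (z : En n) : ∫ q in Box n L, f (q + z) = ∫ q in Box n L, f q := by
  have hB := ZSpan.isAddFundamentalDomain' (latBasis n hL.ne') (volume : Measure (En n))
  rw [← box_eq hL] at hB
  have h2 := hB.vadd_of_comm z
  have : Countable (Submodule.span ℤ (Set.range (latBasis n hL.ne'))).toAddSubgroup :=
    inferInstanceAs (Countable (Submodule.span ℤ (Set.range (latBasis n hL.ne'))))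
  have h3 := hB.setIntegral_eq h2 (f := f) (fun g x => by
    rw [AddSubgroup.vadd_def, vadd_eq_add, add_comm, hf.lattice hL g.2])
  rw [h3]
  have h4 := (measurePreserving_add_right (volume : Measure (En n)) z).setIntegral_image_emb
    (measurableEmbedding_addRight z) f (Box n L)
  rw [← h4]
  congr 2
  ext x
  simp only [Set.mem_vadd_set, Set.mem_image, vadd_eq_add, add_comm]

/-! ### Bounds on the potential -/

lemma Per.gradient {n : ℕ} {L : ℝ} {V : En n → ℝ} (hper : Per L V) : Per L (gradient V) := by
  intro q i
  unfold _root_.gradient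
  rw [← fderiv_comp_add_right]
  congr 2
  ext1 x
  exact hper x i

lemma gradient_contDiff {n : ℕ} {V : En n → ℝ} (hV : ContDiff ℝ (⊤ : ℕ∞) V) :
    ContDiff ℝ 1 (gradient V) := by
  have h : ContDiff ℝ 1 (fderiv ℝ V) := hV.fderiv_right (by norm_cast)
  exact (InnerProductSpace.toDual ℝ (En n)).symm.toContinuousLinearEquiv.contDiff.comp h

/-- A smooth periodic potential is bounded, has bounded gradient, and a second-order Taylor
estimate holds with a uniform constant. -/
lemma potential_bounds {n : ℕ} {L : ℝ} (hL : 0 < L) {V : En n → ℝ}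
    (hV : ContDiff ℝ (⊤ : ℕ∞) V) (hper : Per L V) :
    ∃ M > 0, ∃ G > 0, ∃ K > 0, (∀ q, |V q| ≤ M) ∧ (∀ q, ‖gradient V q‖ ≤ G) ∧
      ∀ q q' : En n, |V q' - V q - ⟪gradient V q, q' - q⟫| ≤ K * ‖q' - q‖ ^ 2 := by
  have hg := gradient_contDiff hV
  obtain ⟨M, hM, hM'⟩ := hper.bounded hL hV.continuous
  obtain ⟨G, hG, hG'⟩ := hper.gradient.bounded hL hg.continuous
  have hper2 : Per L (fderiv ℝ (gradient V)) := by
    intro q i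
    rw [← fderiv_comp_add_right]
    congr 1
    ext1 x
    exact hper.gradient x i
  obtain ⟨K, hK, hK'⟩ := hper2.bounded hL (hg.continuous_fderiv one_ne_zero)
  refine ⟨M, hM, G, hG, K, hK, hM', hG', fun q q' => ?_⟩
  have hlip : ∀ x y, ‖gradient V y - gradient V x‖ ≤ K * ‖y - x‖ := fun x y =>
    convex_univ.norm_image_sub_le_of_norm_fderiv_le
      (fun z _ => (hg.differentiable one_ne_zero) z) (fun z _ => hK' z)
      (Set.mem_univ x) (Set.mem_univ y)
  have hd : ∀ z, fderiv ℝ V z = InnerProductSpace.toDual ℝ (En n) (gradient V z) := fun z => by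
    simp [gradient]
  have hdiff : Differentiable ℝ V := hV.differentiable (by norm_num)
  have key := (convex_closedBall q ‖q' - q‖).norm_image_sub_le_of_norm_hasFDerivWithin_le'
    (f := V) (f' := fderiv ℝ V) (φ := fderiv ℝ V q) (C := K * ‖q' - q‖) (x := q) (y := q')
    (fun z _ => (hdiff z).hasFDerivAt.hasFDerivWithinAt)
    (fun z hz => by
      rw [hd, hd, ← map_sub, LinearIsometryEquiv.norm_map]
      refine (hlip q z).trans ?_
      rw [mem_closedBall_iff_norm] at hz
      gcongr)
    (Metric.mem_closedBall_self (norm_nonneg _)) (mem_closedBall_iff_norm.2 le_rfl)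
  rw [hd, InnerProductSpace.toDual_apply_apply, Real.norm_eq_abs] at key
  exact key.trans (le_of_eq (by ring))

/-! ### The heat kernel -/

/-- The heat kernel on `ℝⁿ` at time `s`, i.e. the centred Gaussian density of variance `2 s`. -/
def heat {n : ℕ} (s : ℝ) (x : En n) : ℝ :=
  (4 * Real.pi * s) ^ (-(n : ℝ) / 2) * Real.exp (-‖x‖ ^ 2 / (4 * s))

lemma heat_pos {n : ℕ} {s : ℝ} (hs : 0 < s) (x : En n) : 0 < heat s x := by
  unfold heat; positivity

lemma heat_continuous {n : ℕ} (s : ℝ) : Continuous (heat (n := n) s) := by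
  unfold heat; fun_prop

lemma heat_neg {n : ℕ} (s : ℝ) (x : En n) : heat s (-x) = heat s x := by
  simp [heat]

lemma heat_integral {n : ℕ} {s : ℝ} (hs : 0 < s) : ∫ x : En n, heat s x = 1 := by
  have h := GaussianFourier.integral_rexp_neg_mul_sq_norm (V := En n)
    (show 0 < 1 / (4 * s) by positivity)
  have e : ∀ x : En n, heat s x =
      (4 * Real.pi * s) ^ (-(n : ℝ) / 2) * Real.exp (-(1 / (4 * s)) * ‖x‖ ^ 2) := fun x => by
    unfold heat; congr 2; ring
  simp_rw [e]
  rw [integral_const_mul, h, finrank_euclideanSpace, Fintype.card_fin,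
    show Real.pi / (1 / (4 * s)) = 4 * Real.pi * s by field_simp,
    ← Real.rpow_add (by positivity)]
  rw [show -(n : ℝ) / 2 + n / 2 = 0 by ring, Real.rpow_zero]

lemma heat_integrable {n : ℕ} {s : ℝ} (hs : 0 < s) : Integrable (heat (n := n) s) := by
  by_contra h
  have := heat_integral (n := n) hs
  rw [integral_undef h] at this
  exact zero_ne_one this

/-- Semigroup property of the heat kernel, by completing the square. -/
lemma heat_conv {n : ℕ} {s t : ℝ} (hs : 0 < s) (ht : 0 < t) (x z : En n) :
    ∫ y, heat s (y - x) * heat t (z - y) = heat (s + t) (z - x) := by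
  have hst : 0 < s + t := by positivity
  have key : ∀ y : En n, heat s (y - x) * heat t (z - y) =
      heat (s + t) (z - x) *
        heat (s * t / (s + t)) (y - ((t / (s + t)) • x + (s / (s + t)) • z)) := by
    intro y
    have hsq : ‖y - x‖ ^ 2 / (4 * s) + ‖z - y‖ ^ 2 / (4 * t) =
        ‖z - x‖ ^ 2 / (4 * (s + t)) +
          ‖y - ((t / (s + t)) • x + (s / (s + t)) • z)‖ ^ 2 / (4 * (s * t / (s + t))) := by
      -- with `a = y - x` and `b = z - x` the last vector is `a - (s / (s + t)) b`
      have e1 : z - y = (z - x) - (y - x) := by abel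
      have e2 : y - ((t / (s + t)) • x + (s / (s + t)) • z) =
          (y - x) - (s / (s + t)) • (z - x) := by
        have : t / (s + t) = 1 - s / (s + t) := by field_simp; ring
        rw [this]; module
      rw [e1, e2]
      generalize y - x = a
      generalize z - x = b
      rw [norm_sub_sq_real, norm_sub_sq_real, inner_smul_right, norm_smul, mul_pow,
        Real.norm_eq_abs, sq_abs, real_inner_comm]
      field_simp
      ring
    unfold heat
    have hc : (4 * Real.pi * s) ^ (-(n : ℝ) / 2) * (4 * Real.pi * t) ^ (-(n : ℝ) / 2) =
        (4 * Real.pi * (s + t)) ^ (-(n : ℝ) / 2) *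
          (4 * Real.pi * (s * t / (s + t))) ^ (-(n : ℝ) / 2) := by
      rw [← Real.mul_rpow (by positivity) (by positivity),
        ← Real.mul_rpow (by positivity) (by positivity)]
      congr 1
      field_simp
    rw [mul_mul_mul_comm, hc, ← Real.exp_add, mul_mul_mul_comm, ← Real.exp_add]
    congr 2
    linear_combination -hsq
  simp_rw [key]
  rw [integral_const_mul, integral_sub_right_eq_self (fun y => heat (s * t / (s + t)) y),
    heat_integral (by positivity), mul_one]

/-! ### The Metropolis kernel -/

/-- Density of the accepted moves of the chain. -/
def ker {n : ℕ} (V : En n → ℝ) (dt : ℝ) (q q' : En n) : ℝ := Rk V dt q q' * Tker V dt q q'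

lemma Tker_eq_heat {n : ℕ} (V : En n → ℝ) (dt : ℝ) (q q' : En n) :
    Tker V dt q q' = heat dt (q' - q + dt • gradient V q) := rfl

lemma Tker_pos {n : ℕ} (V : En n → ℝ) {dt : ℝ} (hdt : 0 < dt) (q q' : En n) :
    0 < Tker V dt q q' := heat_pos hdt _

/-- The flux `e^{-V(q)} ker(q, q')` is the minimum of the two proposal fluxes, hence symmetric. -/
lemma ker_flux {n : ℕ} (V : En n → ℝ) {dt : ℝ} (hdt : 0 < dt) (q q' : En n) :
    Real.exp (-V q) * ker V dt q q' =
      min (Real.exp (-V q) * Tker V dt q q') (Real.exp (-V q') * Tker V dt q' q) := by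
  have hT := Tker_pos V hdt q q'
  have hp : 0 < Real.exp (-V q) * Tker V dt q q' := by positivity
  rw [ker, Rk, mul_left_comm, mul_comm (min _ _), mul_min_of_nonneg _ _ hp.le, mul_one,
    mul_div_cancel₀ _ hp.ne']

lemma ker_symm {n : ℕ} (V : En n → ℝ) {dt : ℝ} (hdt : 0 < dt) (q q' : En n) :
    Real.exp (-V q) * ker V dt q q' = Real.exp (-V q') * ker V dt q' q := by
  rw [ker_flux V hdt, ker_flux V hdt, min_comm]

lemma ker_nonneg {n : ℕ} (V : En n → ℝ) {dt : ℝ} (hdt : 0 < dt) (q q' : En n) :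
    0 ≤ ker V dt q q' := by
  have h1 := Tker_pos V hdt q q'
  have h2 := Tker_pos V hdt q' q
  unfold ker Rk
  positivity

lemma ker_le {n : ℕ} (V : En n → ℝ) {dt : ℝ} (hdt : 0 < dt) (q q' : En n) :
    ker V dt q q' ≤ Tker V dt q q' :=
  mul_le_of_le_one_left (Tker_pos V hdt q q').le (min_le_left _ _)

lemma ker_continuous {n : ℕ} {V : En n → ℝ} (hV : ContDiff ℝ (⊤ : ℕ∞) V) {dt : ℝ}
    (hdt : 0 < dt) : Continuous fun p : En n × En n => ker V dt p.1 p.2 := by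
  have hg := (gradient_contDiff hV).continuous
  have hc := hV.continuous
  have hT : Continuous fun p : En n × En n => Tker V dt p.1 p.2 := by
    unfold Tker; fun_prop
  have hT' : Continuous fun p : En n × En n => Tker V dt p.2 p.1 := by
    unfold Tker; fun_prop
  unfold ker Rk
  refine (continuous_const.min (Continuous.div ?_ ?_ ?_)).mul hT
  · exact (by fun_prop : Continuous fun p : En n × En n => Real.exp (-V p.2)).mul hT'
  · exact (by fun_prop : Continuous fun p : En n × En n => Real.exp (-V p.1)).mul hT
  · intro p
    have := Tker_pos V hdt p.1 p.2
    positivity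

lemma Tker_integral {n : ℕ} (V : En n → ℝ) {dt : ℝ} (hdt : 0 < dt) (q : En n) :
    Integrable (Tker V dt q) ∧ ∫ q', Tker V dt q q' = 1 := by
  have e : ∀ q', Tker V dt q q' = heat dt (q' - (q - dt • gradient V q)) := fun q' => by
    rw [Tker_eq_heat]; congr 1; abel
  constructor
  · rw [show Tker V dt q = fun q' => heat dt (q' - (q - dt • gradient V q)) from funext e]
    exact (heat_integrable hdt).comp_sub_right _
  · simp_rw [e]
    rw [integral_sub_right_eq_self (fun y => heat dt y), heat_integral hdt]

lemma ker_integrable {n : ℕ} {V : En n → ℝ} (hV : ContDiff ℝ (⊤ : ℕ∞) V) {dt : ℝ}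
    (hdt : 0 < dt) (q : En n) : Integrable (ker V dt q) := by
  refine (Tker_integral V hdt q).1.mono' ?_ (Filter.Eventually.of_forall fun q' => ?_)
  · exact ((ker_continuous hV hdt).comp (by fun_prop : Continuous fun q' : En n => (q, q'))
      ).aestronglyMeasurable
  · rw [Real.norm_of_nonneg (ker_nonneg V hdt q q')]; exact ker_le V hdt q q'

lemma ker_integral_le_one {n : ℕ} {V : En n → ℝ} (hV : ContDiff ℝ (⊤ : ℕ∞) V) {dt : ℝ}
    (hdt : 0 < dt) (q : En n) : ∫ q', ker V dt q q' ≤ 1 := by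
  rw [← (Tker_integral V hdt q).2]
  exact integral_mono (ker_integrable hV hdt q) (Tker_integral V hdt q).1 (ker_le V hdt q)

/-- Lower bound of the proposal flux by a heat kernel. In `e^{-V(q)} T(q, q')` the factor
`e^{-⟨∇V(q), q' - q⟩ / 2}` produced by the drift turns `e^{-V(q)}` into `e^{-(V(q) + V(q')) / 2}`
up to a second-order Taylor remainder, which is absorbed by shortening the time from `dt`
to `dt / (1 + 2 K dt)`. -/
lemma Tker_flux_lower {n : ℕ} {V : En n → ℝ} {G K : ℝ} (hK : 0 < K)
    (hG : ∀ q, ‖gradient V q‖ ≤ G)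
    (hT : ∀ q q' : En n, |V q' - V q - ⟪gradient V q, q' - q⟫| ≤ K * ‖q' - q‖ ^ 2)
    {dt : ℝ} (hdt : 0 < dt) (q q' : En n) :
    Real.exp (-((n * K + G ^ 2 / 4) * dt)) * Real.exp (-(V q + V q') / 2) *
      heat (dt / (1 + 2 * K * dt)) (q' - q) ≤ Real.exp (-V q) * Tker V dt q q' := by
  have h1 : 0 < 1 + 2 * K * dt := by positivity
  have hpre : Real.exp (-(n * K * dt)) * (4 * Real.pi * (dt / (1 + 2 * K * dt))) ^ (-(n : ℝ) / 2)
      ≤ (4 * Real.pi * dt) ^ (-(n : ℝ) / 2) := by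
    have e : 4 * Real.pi * dt =
        (1 + 2 * K * dt) * (4 * Real.pi * (dt / (1 + 2 * K * dt))) := by field_simp
    rw [e, Real.mul_rpow h1.le (by positivity)]
    gcongr
    have h2 : 1 + 2 * K * dt ≤ Real.exp (2 * K * dt) := by
      rw [add_comm]; exact Real.add_one_le_exp _
    calc Real.exp (-(n * K * dt)) = (Real.exp (2 * K * dt)) ^ (-(n : ℝ) / 2) := by
          rw [← Real.exp_mul]; congr 1; ring
      _ ≤ _ := Real.rpow_le_rpow_of_nonpos h1 h2 (by
          have : (0 : ℝ) ≤ n := n.cast_nonneg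
          linarith)
  have hexp : -(G ^ 2 / 4 * dt) + -(V q + V q') / 2 +
      -‖q' - q‖ ^ 2 / (4 * (dt / (1 + 2 * K * dt))) ≤
      -V q + -‖q' - q + dt • gradient V q‖ ^ 2 / (4 * dt) := by
    have e1 : -‖q' - q‖ ^ 2 / (4 * (dt / (1 + 2 * K * dt))) =
        -‖q' - q‖ ^ 2 / (4 * dt) - K / 2 * ‖q' - q‖ ^ 2 := by field_simp; ring
    have e2 : -‖q' - q + dt • gradient V q‖ ^ 2 / (4 * dt) = -‖q' - q‖ ^ 2 / (4 * dt)
        - ⟪gradient V q, q' - q⟫ / 2 - dt * ‖gradient V q‖ ^ 2 / 4 := by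
      rw [norm_add_sq_real, inner_smul_right, norm_smul, mul_pow, Real.norm_eq_abs, sq_abs,
        real_inner_comm]
      field_simp
      ring
    have h3 := neg_le_of_abs_le (hT q q')
    have h4 : dt * ‖gradient V q‖ ^ 2 ≤ dt * G ^ 2 := by gcongr; exact hG q
    rw [e1, e2]
    linarith
  calc Real.exp (-((n * K + G ^ 2 / 4) * dt)) * Real.exp (-(V q + V q') / 2) *
      heat (dt / (1 + 2 * K * dt)) (q' - q)
      = (Real.exp (-(n * K * dt)) *
          (4 * Real.pi * (dt / (1 + 2 * K * dt))) ^ (-(n : ℝ) / 2)) *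
        Real.exp (-(G ^ 2 / 4 * dt) + -(V q + V q') / 2 +
          -‖q' - q‖ ^ 2 / (4 * (dt / (1 + 2 * K * dt)))) := by
        rw [Real.exp_add, Real.exp_add, heat,
          show -((n * K + G ^ 2 / 4) * dt) = -(n * K * dt) + -(G ^ 2 / 4 * dt) by ring,
          Real.exp_add]
        ring
    _ ≤ (4 * Real.pi * dt) ^ (-(n : ℝ) / 2) *
        Real.exp (-V q + -‖q' - q + dt • gradient V q‖ ^ 2 / (4 * dt)) := by gcongr
    _ = _ := by rw [Real.exp_add, Tker]; ring

/-- The accepted moves dominate the heat kernel conjugated by `e^{-V/2}`, up to a factor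
`e^{-A dt}`. This is the estimate that survives iteration uniformly in `dt`. -/
lemma ker_lower {n : ℕ} {V : En n → ℝ} {G K : ℝ} (hK : 0 < K)
    (hG : ∀ q, ‖gradient V q‖ ≤ G)
    (hT : ∀ q q' : En n, |V q' - V q - ⟪gradient V q, q' - q⟫| ≤ K * ‖q' - q‖ ^ 2)
    {dt : ℝ} (hdt : 0 < dt) (q q' : En n) :
    Real.exp (-((n * K + G ^ 2 / 4) * dt)) * (Real.exp (V q / 2) *
      (heat (dt / (1 + 2 * K * dt)) (q' - q) * Real.exp (-V q' / 2))) ≤ ker V dt q q' := by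
  have h1 := Tker_flux_lower hK hG hT hdt q q'
  have h2 := Tker_flux_lower hK hG hT hdt q' q
  rw [← neg_sub q' q, heat_neg, add_comm (V q')] at h2
  have h3 := le_min h1 h2
  rw [← ker_flux V hdt] at h3
  refine le_of_mul_le_mul_left (le_trans (le_of_eq ?_) h3) (Real.exp_pos (-V q))
  have e : Real.exp (-(V q + V q') / 2) =
      Real.exp (-V q) * Real.exp (V q / 2) * Real.exp (-V q' / 2) := by
    rw [← Real.exp_add, ← Real.exp_add]; congr 1; ring
  rw [e]; ring

/-! ### Elementary properties of the MALA operator -/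

lemma bdd_mul_integrable {n : ℕ} {g u : En n → ℝ} (hg : Integrable g) (hu : Measurable u) {D : ℝ}
    (hD : ∀ q, |u q| ≤ D) : Integrable fun q => g q * u q :=
  hg.mul_bdd hu.aestronglyMeasurable (Filter.Eventually.of_forall hD)

lemma Pmala_eq_ker {n : ℕ} (V : En n → ℝ) (dt : ℝ) (f : En n → ℝ) (q : En n) :
    Pmala V dt f q = f q + ∫ q', ker V dt q q' * (f q' - f q) := rfl

lemma Pmala_measurable {n : ℕ} {V : En n → ℝ} (hV : ContDiff ℝ (⊤ : ℕ∞) V) {dt : ℝ}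
    (hdt : 0 < dt) {f : En n → ℝ} (hf : Measurable f) : Measurable (Pmala V dt f) := by
  have h : StronglyMeasurable fun p : En n × En n => ker V dt p.1 p.2 * (f p.2 - f p.1) :=
    ((ker_continuous hV hdt).measurable.mul
      ((hf.comp measurable_snd).sub (hf.comp measurable_fst))).stronglyMeasurable
  exact hf.add h.integral_prod_right'.measurable

lemma ker_per {n : ℕ} {L : ℝ} {V : En n → ℝ} (hper : Per L V) (dt : ℝ) (q q' : En n) (i : Fin n) :
    ker V dt (q + L • EuclideanSpace.single i (1 : ℝ)) (q' + L • EuclideanSpace.single i (1 : ℝ)) =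
      ker V dt q q' := by
  have hg := hper.gradient
  simp only [ker, Rk, Tker, hper q i, hper q' i, hg q i, hg q' i, add_sub_add_right_eq_sub]

lemma Pmala_per {n : ℕ} {L : ℝ} {V : En n → ℝ} (hper : Per L V) (dt : ℝ) {f : En n → ℝ}
    (hf : Per L f) : Per L (Pmala V dt f) := by
  intro q i
  rw [Pmala_eq_ker, Pmala_eq_ker, hf q i]
  congr 1
  rw [← integral_add_right_eq_self _ (L • EuclideanSpace.single i (1 : ℝ))]
  congr 1
  ext q'
  rw [ker_per hper, hf q' i]

lemma Pmala_add_const {n : ℕ} (V : En n → ℝ) (dt : ℝ) (f : En n → ℝ) (c : ℝ) :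
    Pmala V dt (fun q => f q + c) = fun q => Pmala V dt f q + c := by
  ext q
  simp only [Pmala_eq_ker, add_sub_add_right_eq_sub]
  ring

lemma Pmala_neg {n : ℕ} (V : En n → ℝ) (dt : ℝ) (f : En n → ℝ) :
    Pmala V dt (fun q => -f q) = fun q => -Pmala V dt f q := by
  ext q
  have e : ∀ q', ker V dt q q' * (-f q' - -f q) = -(ker V dt q q' * (f q' - f q)) := fun q' => by
    ring
  simp only [Pmala_eq_ker, e, integral_neg]
  ring

lemma Pmala_iter_add_const {n : ℕ} (V : En n → ℝ) (dt : ℝ) (f : En n → ℝ) (c : ℝ) (k : ℕ) :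
    (Pmala V dt)^[k] (fun q => f q + c) = fun q => (Pmala V dt)^[k] f q + c := by
  induction k generalizing f with
  | zero => rfl
  | succ k ih => rw [Function.iterate_succ_apply, Pmala_add_const, ih]; rfl

lemma Pmala_iter_neg {n : ℕ} (V : En n → ℝ) (dt : ℝ) (f : En n → ℝ) (k : ℕ) :
    (Pmala V dt)^[k] (fun q => -f q) = fun q => -(Pmala V dt)^[k] f q := by
  induction k generalizing f with
  | zero => rfl
  | succ k ih => rw [Function.iterate_succ_apply, Pmala_neg, ih]; rfl

/-- Discarding the rejected moves gives a lower bound on nonnegative functions. -/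
lemma Pmala_ge {n : ℕ} {V : En n → ℝ} (hV : ContDiff ℝ (⊤ : ℕ∞) V) {dt : ℝ}
    (hdt : 0 < dt) {f : En n → ℝ} (hf : Measurable f) {B : ℝ} (hB : ∀ q, |f q| ≤ B)
    (h0 : ∀ q, 0 ≤ f q) (q : En n) : ∫ q', ker V dt q q' * f q' ≤ Pmala V dt f q := by
  have hi := ker_integrable hV hdt q
  rw [Pmala_eq_ker]
  simp_rw [mul_sub]
  rw [integral_sub (bdd_mul_integrable hi hf hB) (hi.mul_const _), integral_mul_const]
  nlinarith [ker_integral_le_one hV hdt q, h0 q]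

lemma Pmala_nonneg {n : ℕ} {V : En n → ℝ} (hV : ContDiff ℝ (⊤ : ℕ∞) V) {dt : ℝ}
    (hdt : 0 < dt) {f : En n → ℝ} (hf : Measurable f) {B : ℝ} (hB : ∀ q, |f q| ≤ B)
    (h0 : ∀ q, 0 ≤ f q) (q : En n) : 0 ≤ Pmala V dt f q :=
  (integral_nonneg fun q' => mul_nonneg (ker_nonneg V hdt q q') (h0 q')).trans
    (Pmala_ge hV hdt hf hB h0 q)

lemma Pmala_bound {n : ℕ} {V : En n → ℝ} (hV : ContDiff ℝ (⊤ : ℕ∞) V) {dt : ℝ}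
    (hdt : 0 < dt) {f : En n → ℝ} (hf : Measurable f) {B : ℝ} (hB : ∀ q, |f q| ≤ B)
    (q : En n) : |Pmala V dt f q| ≤ B := by
  have key : ∀ g : En n → ℝ, Measurable g → (∀ q, |g q| ≤ B) → -B ≤ Pmala V dt g q := by
    intro g hg hgB
    have h := Pmala_nonneg hV hdt (f := fun q => g q + B) (hg.add_const B) (B := 2 * B)
      (fun q => by have := abs_le.1 (hgB q); rw [abs_le]; constructor <;> linarith)
      (fun q => by have := abs_le.1 (hgB q); linarith) q
    rw [Pmala_add_const] at h
    linarith
  have h1 := key f hf hB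
  have h2 := key (fun q => -f q) hf.neg (fun q => by rw [abs_neg]; exact hB q)
  rw [Pmala_neg] at h2
  exact abs_le.2 ⟨h1, by linarith⟩

/-- Invariance of the Gibbs measure. Writing a move as `q' = q + z`, detailed balance and
periodicity make the total flux along `z` the opposite of the flux along `-z`. -/
lemma Pmala_invariant {n : ℕ} {L : ℝ} (hL : 0 < L) {V : En n → ℝ}
    (hV : ContDiff ℝ (⊤ : ℕ∞) V) (hper : Per L V) {M : ℝ} (hM : ∀ q, |V q| ≤ M) {dt : ℝ}
    (hdt : 0 < dt) {f : En n → ℝ} (hf : Measurable f) (hfp : Per L f) {B : ℝ}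
    (hB : ∀ q, |f q| ≤ B) :
    ∫ q in Box n L, Pmala V dt f q * Real.exp (-V q) = ∫ q in Box n L, f q * Real.exp (-V q) := by
  have : Fact (volume (Box n L) < ⊤) := ⟨box_volume_lt_top hL⟩
  have hB0 : 0 ≤ B := (abs_nonneg _).trans (hB 0)
  let F : En n → En n → ℝ := fun q z => Real.exp (-V q) * (ker V dt q (q + z) * (f (q + z) - f q))
  have hVM : ∀ q, -V q ≤ M := fun q => by have := abs_le.1 (hM q); linarith
  have hFm : Measurable fun p : En n × En n => F p.1 p.2 := by
    have hk : Measurable fun p : En n × En n => ker V dt p.1 (p.1 + p.2) :=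
      ((ker_continuous hV hdt).comp
        (by fun_prop : Continuous fun p : En n × En n => (p.1, p.1 + p.2))).measurable
    have hVm := hV.continuous.measurable
    exact (by fun_prop : Measurable fun p : En n × En n => Real.exp (-V p.1)).mul
      (hk.mul (by fun_prop))
  have hki : ∀ q, Integrable fun z => ker V dt q (q + z) := fun q =>
    (ker_integrable hV hdt q).comp_add_left q
  have hFi : ∀ q, Integrable (F q) := fun q =>
    (bdd_mul_integrable (hki q) (D := 2 * B) (u := fun z => f (q + z) - f q) (by fun_prop)
      (fun z => by
        have h1 := abs_le.1 (hB (q + z)); have h2 := abs_le.1 (hB q)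
        rw [abs_le]; constructor <;> linarith)).const_mul _
  have hFb : ∀ q, ∫ z, ‖F q z‖ ≤ Real.exp M * (2 * B) := by
    intro q
    calc ∫ z, ‖F q z‖ ≤ ∫ z, ker V dt q (q + z) * (Real.exp M * (2 * B)) := by
          refine integral_mono (hFi q).norm ((hki q).mul_const _) fun z => ?_
          have hk := ker_nonneg V hdt q (q + z)
          have h3 : |f (q + z) - f q| ≤ 2 * B := by
            have h1 := abs_le.1 (hB (q + z)); have h2 := abs_le.1 (hB q)
            rw [abs_le]; constructor <;> linarith
          change ‖Real.exp (-V q) * (ker V dt q (q + z) * (f (q + z) - f q))‖ ≤ _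
          rw [norm_mul, norm_mul, Real.norm_of_nonneg hk, Real.norm_of_nonneg (Real.exp_pos _).le,
            Real.norm_eq_abs]
          calc _ ≤ Real.exp M * (ker V dt q (q + z) * (2 * B)) := by
                gcongr
                exact hVM q
            _ = _ := by ring
      _ = (∫ z, ker V dt q (q + z)) * (Real.exp M * (2 * B)) := integral_mul_const _ _
      _ ≤ 1 * (Real.exp M * (2 * B)) := by
          gcongr
          rw [integral_add_left_eq_self (fun z => ker V dt q z) q]
          exact ker_integral_le_one hV hdt q
      _ = _ := one_mul _
  have hprod : Integrable (Function.uncurry F) ((volume.restrict (Box n L)).prod volume) := by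
    refine (integrable_prod_iff hFm.aestronglyMeasurable).2
      ⟨Filter.Eventually.of_forall hFi, ?_⟩
    refine Integrable.of_bound (C := Real.exp M * (2 * B))
      hFm.stronglyMeasurable.norm.integral_prod_right'.aestronglyMeasurable
      (Filter.Eventually.of_forall fun q => ?_)
    rw [Real.norm_of_nonneg (integral_nonneg fun _ => norm_nonneg _)]
    exact hFb q
  have hanti : ∀ z, ∫ q in Box n L, F q z = -∫ q in Box n L, F q (-z) := by
    intro z
    have hFp : Per L fun q => F q z := by
      intro q i
      change Real.exp (-V _) * (ker V dt _ _ * (f _ - f _)) = _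
      rw [add_right_comm q _ z, ker_per hper, hper q i, hfp q i, hfp (q + z) i]
    rw [← hFp.setIntegral_shift hL (-z), ← integral_neg]
    congr 1
    ext q
    change Real.exp (-V (q + -z)) * (ker V dt (q + -z) (q + -z + z) * (f (q + -z + z) - f (q + -z)))
      = -(Real.exp (-V q) * (ker V dt q (q + -z) * (f (q + -z) - f q)))
    rw [neg_add_cancel_right]
    have := ker_symm V hdt (q + -z) q
    linear_combination (f q - f (q + -z)) * this
  have hzero : ∫ q in Box n L, ∫ z, F q z = 0 := by
    rw [integral_integral_swap hprod]
    have h1 : ∫ z, ∫ q in Box n L, F q z = -∫ z, ∫ q in Box n L, F q z := by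
      conv_lhs => rw [← integral_neg_eq_self]
      rw [← integral_neg]
      congr 1
      ext z
      rw [hanti (-z), neg_neg]
    linarith
  have hVe : Measurable fun q => Real.exp (-V q) := hV.continuous.measurable.neg.exp
  have hfi : Integrable (fun q => f q * Real.exp (-V q)) (volume.restrict (Box n L)) := by
    refine Integrable.of_bound (C := B * Real.exp M) (hf.mul hVe).aestronglyMeasurable
      (Filter.Eventually.of_forall fun q => ?_)
    rw [norm_mul, Real.norm_eq_abs, Real.norm_of_nonneg (Real.exp_pos _).le]
    gcongr
    exacts [hB q, hVM q]
  have e : ∀ q, Pmala V dt f q * Real.exp (-V q) = f q * Real.exp (-V q) + ∫ z, F q z := by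
    intro q
    rw [Pmala_eq_ker, add_mul]
    congr 1
    change _ = ∫ z, Real.exp (-V q) * (ker V dt q (q + z) * (f (q + z) - f q))
    rw [integral_const_mul,
      integral_add_left_eq_self (fun z => ker V dt q z * (f z - f q)) q, mul_comm]
  simp_rw [e]
  have hFI : Integrable (fun q => ∫ z, F q z) (volume.restrict (Box n L)) :=
    hprod.integral_prod_left
  rw [integral_add hfi hFI, hzero, add_zero]

/-! ### Uniform minorization -/

lemma heat_heat {n : ℕ} {s t : ℝ} (hs : 0 < s) (ht : 0 < t) {u : En n → ℝ} (hu : Measurable u)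
    {D : ℝ} (hD : ∀ q, |u q| ≤ D) (x : En n) :
    Integrable (fun y => heat s (y - x) * ∫ z, heat t (z - y) * u z) ∧
      ∫ y, heat s (y - x) * ∫ z, heat t (z - y) * u z = ∫ z, heat (s + t) (z - x) * u z := by
  have h1 : Integrable (fun p : En n × En n => heat s (p.2 - x) * heat t (p.1 - p.2))
      (volume.prod volume) :=
    Integrable.convolution_integrand (ContinuousLinearMap.mul ℝ ℝ)
      ((heat_integrable hs).comp_sub_right x) (heat_integrable ht)
  have h2 : Integrable (Function.uncurry fun z y : En n => heat s (y - x) * heat t (z - y) * u z)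
      (volume.prod volume) :=
    h1.mul_bdd (hu.comp measurable_fst).aestronglyMeasurable
      (Filter.Eventually.of_forall fun p => hD p.1)
  have e : ∀ y, heat s (y - x) * ∫ z, heat t (z - y) * u z =
      ∫ z, heat s (y - x) * heat t (z - y) * u z := fun y => by
    rw [← integral_const_mul]; simp_rw [mul_assoc]
  simp_rw [e]
  refine ⟨h2.integral_prod_right, ?_⟩
  rw [← integral_integral_swap h2]
  congr 1
  ext z
  rw [integral_mul_const, heat_conv hs ht]

/-- Iterated form of `ker_lower`: `k + 1` steps of the chain dominate the heat kernel at time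
`(k + 1) dt / (1 + 2 K dt)` conjugated by `e^{-V/2}`. -/
lemma Pmala_iter_lower {n : ℕ} {V : En n → ℝ} (hV : ContDiff ℝ (⊤ : ℕ∞) V) {M G K : ℝ}
    (hK : 0 < K) (hM : ∀ q, |V q| ≤ M) (hG : ∀ q, ‖gradient V q‖ ≤ G)
    (hT : ∀ q q' : En n, |V q' - V q - ⟪gradient V q, q' - q⟫| ≤ K * ‖q' - q‖ ^ 2)
    {dt : ℝ} (hdt : 0 < dt) {B : ℝ} (k : ℕ) :
    ∀ f : En n → ℝ, Measurable f → (∀ q, |f q| ≤ B) → (∀ q, 0 ≤ f q) → ∀ q,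
      Real.exp (-((n * K + G ^ 2 / 4) * dt)) ^ (k + 1) * (Real.exp (V q / 2) *
        ∫ z, heat ((k + 1) * (dt / (1 + 2 * K * dt))) (z - q) * (Real.exp (-V z / 2) * f z)) ≤
      (Pmala V dt)^[k + 1] f q := by
  set c := Real.exp (-((n * K + G ^ 2 / 4) * dt)) with hc
  set s := dt / (1 + 2 * K * dt) with hs
  have hs0 : 0 < s := by positivity
  have hc0 : 0 < c := Real.exp_pos _
  have hu : ∀ f : En n → ℝ, Measurable f → Measurable fun z => Real.exp (-V z / 2) * f z :=
    fun f hf => by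
      have := hV.continuous.measurable
      fun_prop
  have huB : ∀ f : En n → ℝ, (∀ q, |f q| ≤ B) →
      ∀ z, |Real.exp (-V z / 2) * f z| ≤ Real.exp (M / 2) * B := fun f hf z => by
    rw [abs_mul, abs_of_pos (Real.exp_pos _)]
    have := abs_le.1 (hM z)
    gcongr
    · linarith
    · exact hf z
  have one : ∀ f : En n → ℝ, Measurable f → (∀ q, |f q| ≤ B) → (∀ q, 0 ≤ f q) → ∀ q,
      c * (Real.exp (V q / 2) * ∫ z, heat s (z - q) * (Real.exp (-V z / 2) * f z)) ≤
        Pmala V dt f q := by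
    intro f hf hB h0 q
    refine le_trans ?_ (Pmala_ge hV hdt hf hB h0 q)
    rw [← integral_const_mul, ← integral_const_mul]
    refine integral_mono ?_ (bdd_mul_integrable (ker_integrable hV hdt q) hf hB) fun z => ?_
    · exact ((bdd_mul_integrable ((heat_integrable hs0).comp_sub_right q) (hu f hf)
        (huB f hB)).const_mul _).const_mul _
    · have := mul_le_mul_of_nonneg_right (ker_lower hK hG hT hdt q z) (h0 z)
      refine le_trans (le_of_eq ?_) this
      ring
  induction k with
  | zero =>
    intro f hf hB h0 q
    simpa using one f hf hB h0 q
  | succ k ih =>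
    intro f hf hB h0 q
    rw [Function.iterate_succ_apply]
    have hPm := Pmala_measurable hV hdt hf
    have hPB := Pmala_bound hV hdt hf hB
    refine le_trans ?_ (ih (Pmala V dt f) hPm hPB (Pmala_nonneg hV hdt hf hB h0) q)
    have hks : 0 < ((k : ℝ) + 1) * s := by positivity
    obtain ⟨hInt, heq⟩ := heat_heat hks hs0 (hu f hf) (huB f hB) q
    have e : ((k + 1 : ℕ) + 1 : ℝ) * s = (k + 1) * s + s := by push_cast; ring
    rw [e, ← heq, pow_succ, mul_assoc, mul_left_comm c, ← integral_const_mul]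
    refine mul_le_mul_of_nonneg_left (mul_le_mul_of_nonneg_left ?_ (Real.exp_pos _).le)
      (pow_pos hc0 _).le
    refine integral_mono (hInt.const_mul c)
      (bdd_mul_integrable ((heat_integrable hks).comp_sub_right q) (hu _ hPm) (huB _ hPB))
      fun y => ?_
    have h1 := mul_le_mul_of_nonneg_left (one f hf hB h0 y) (Real.exp_pos (-V y / 2)).le
    have h2 : Real.exp (-V y / 2) * Real.exp (V y / 2) = 1 := by
      rw [← Real.exp_add, ← Real.exp_zero]; congr 1; ring
    have h3 := mul_le_mul_of_nonneg_left h1 (heat_pos hks (y - q)).le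
    refine le_trans (le_of_eq ?_) h3
    change c * (heat ((k + 1) * s) (y - q) * _) = _
    linear_combination (-(heat ((k + 1) * s) (y - q) * c *
      ∫ z, heat s (z - y) * (Real.exp (-V z / 2) * f z))) * h2

lemma gibbs_Z_pos {n : ℕ} {L : ℝ} (hL : 0 < L) {V : En n → ℝ} (hV : Continuous V) {M : ℝ}
    (hM : ∀ q, |V q| ≤ M) :
    IntegrableOn (fun q => Real.exp (-V q)) (Box n L) ∧ 0 < ∫ q in Box n L, Real.exp (-V q) := by
  have : Fact (volume (Box n L) < ⊤) := ⟨box_volume_lt_top hL⟩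
  have hi : IntegrableOn (fun q => Real.exp (-V q)) (Box n L) := by
    refine Integrable.of_bound (C := Real.exp M)
      (Real.continuous_exp.comp hV.neg).aestronglyMeasurable
      (Filter.Eventually.of_forall fun q => ?_)
    have := abs_le.1 (hM q)
    rw [Real.norm_of_nonneg (Real.exp_pos _).le]
    gcongr
    linarith
  refine ⟨hi, ?_⟩
  have : NeZero (volume.restrict (Box n L)) :=
    ⟨by rw [Ne, Measure.restrict_eq_zero]; exact box_volume_ne_zero hL⟩
  exact integral_exp_pos hi

/-- Doeblin condition over the physical time `m dt ∈ [1, 2]`, with a constant independent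
of `dt`. -/
lemma doeblin {n : ℕ} {L : ℝ} (hL : 0 < L) {V : En n → ℝ}
    (hV : ContDiff ℝ (⊤ : ℕ∞) V) (hper : Per L V) :
    ∃ α > 0, ∀ dt : ℝ, 0 < dt → dt ≤ 1 → ∀ m : ℕ, 1 ≤ m * dt → m * dt ≤ 2 →
      ∀ (B : ℝ) (f : En n → ℝ), Measurable f → Per L f → (∀ q, |f q| ≤ B) → (∀ q, 0 ≤ f q) →
        ∀ q, α * muInt V L f ≤ (Pmala V dt)^[m] f q := by
  obtain ⟨M, hM0, G, hG0, K, hK, hM, hG, hT⟩ := potential_bounds hL hV hper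
  obtain ⟨D, hD⟩ := Metric.isBounded_iff.1 (box_bounded (n := n) hL)
  obtain ⟨-, hZ⟩ := gibbs_Z_pos (n := n) hL hV.continuous hM
  have : Fact (volume (Box n L) < ⊤) := ⟨box_volume_lt_top hL⟩
  set Z := ∫ q in Box n L, Real.exp (-V q) with hZdef
  set A := n * K + G ^ 2 / 4 with hA
  -- `h₀` bounds from below the heat kernel on the box at all times in `[1 / (1 + 2 K), 2]`
  set h₀ : ℝ := (4 * Real.pi * 2) ^ (-(n : ℝ) / 2) *
    Real.exp (-D ^ 2 / (4 * (1 / (1 + 2 * K)))) with hh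
  have hh0 : 0 < h₀ := by positivity
  refine ⟨Real.exp (-(A * 2)) * Real.exp (-M / 2) * h₀ * Real.exp (-M / 2) * Z, by positivity,
    fun dt hdt hdt1 m hm1 hm2 B f hf hfp hB h0 q => ?_⟩
  have hA0 : 0 ≤ A := by positivity
  have hPper : ∀ k : ℕ, Per L ((Pmala V dt)^[k] f) := by
    intro k
    induction k with
    | zero => exact hfp
    | succ k ih => rw [Function.iterate_succ_apply']; exact Pmala_per hper dt ih
  obtain ⟨p, hp, hqp⟩ := exists_box hL q
  rw [hqp _ (hPper m)]
  obtain ⟨k, rfl⟩ : ∃ k, m = k + 1 := by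
    cases m with
    | zero => norm_num at hm1
    | succ k => exact ⟨k, rfl⟩
  refine le_trans ?_ (Pmala_iter_lower hV hK hM hG hT hdt k f hf hB h0 p)
  push_cast at hm1 hm2
  set τ := ((k : ℝ) + 1) * (dt / (1 + 2 * K * dt)) with hτ
  have hd : 0 < 1 + 2 * K * dt := by positivity
  have hτ0 : 0 < τ := by positivity
  have hτ' : τ = ((k + 1) * dt) / (1 + 2 * K * dt) := by rw [hτ]; ring
  have hτ1 : 1 / (1 + 2 * K) ≤ τ := by
    rw [hτ']
    refine div_le_div₀ (by positivity) hm1 hd ?_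
    nlinarith
  have hτ2 : τ ≤ 2 := by
    rw [hτ']
    refine (div_le_self (by positivity) ?_).trans hm2
    have : 0 < K * dt := by positivity
    linarith
  have hheat : ∀ z ∈ Box n L, h₀ ≤ heat τ (z - p) := by
    intro z hz
    have hzp : ‖z - p‖ ≤ D := by rw [← dist_eq_norm]; exact hD hz hp
    have hn0 : (0 : ℝ) ≤ n := n.cast_nonneg
    have h1 : (4 * Real.pi * 2) ^ (-(n : ℝ) / 2) ≤ (4 * Real.pi * τ) ^ (-(n : ℝ) / 2) :=
      Real.rpow_le_rpow_of_nonpos (by positivity) (by gcongr) (by linarith)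
    have h2 : -D ^ 2 / (4 * (1 / (1 + 2 * K))) ≤ -‖z - p‖ ^ 2 / (4 * τ) := by
      rw [neg_div, neg_div, neg_le_neg_iff]
      gcongr
    rw [hh, heat]
    gcongr
  have hcpow : Real.exp (-(A * 2)) ≤ Real.exp (-(A * dt)) ^ (k + 1) := by
    rw [← Real.exp_nat_mul]
    refine Real.exp_le_exp.2 ?_
    push_cast
    nlinarith
  have hVm := hV.continuous.measurable
  have hInt : Integrable fun z => heat τ (z - p) * (Real.exp (-V z / 2) * f z) := by
    refine bdd_mul_integrable ((heat_integrable hτ0).comp_sub_right p) (by fun_prop)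
      (D := Real.exp (M / 2) * B) fun z => ?_
    rw [abs_mul, abs_of_pos (Real.exp_pos _)]
    have := abs_le.1 (hM z)
    gcongr
    · linarith
    · exact hB z
  have hInt2 : IntegrableOn (fun z => f z * Real.exp (-V z)) (Box n L) := by
    refine Integrable.of_bound (C := B * Real.exp M) (by fun_prop)
      (Filter.Eventually.of_forall fun z => ?_)
    rw [norm_mul, Real.norm_eq_abs, Real.norm_of_nonneg (Real.exp_pos _).le]
    have := abs_le.1 (hM z)
    have := (abs_nonneg _).trans (hB z)
    gcongr
    · exact hB z
    · linarith
  have hI : h₀ * Real.exp (-M / 2) * ∫ z in Box n L, f z * Real.exp (-V z) ≤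
      ∫ z, heat τ (z - p) * (Real.exp (-V z / 2) * f z) := by
    rw [← integral_const_mul]
    refine le_trans ?_ (setIntegral_le_integral hInt (s := Box n L)
      (Filter.Eventually.of_forall fun z =>
        mul_nonneg (heat_pos hτ0 _).le (mul_nonneg (Real.exp_pos _).le (h0 z))))
    refine setIntegral_mono_on (hInt2.const_mul _) hInt.integrableOn (box_measurable hL)
      fun z hz => ?_
    have h1 : Real.exp (-M / 2) * Real.exp (-V z) ≤ Real.exp (-V z / 2) := by
      rw [← Real.exp_add]
      have := abs_le.1 (hM z)
      exact Real.exp_le_exp.2 (by linarith)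
    calc h₀ * Real.exp (-M / 2) * (f z * Real.exp (-V z))
        = h₀ * ((Real.exp (-M / 2) * Real.exp (-V z)) * f z) := by ring
      _ ≤ _ := by
        have := hheat z hz
        have := h0 z
        have := heat_pos hτ0 (z - p)
        gcongr
  have hVp : Real.exp (-M / 2) ≤ Real.exp (V p / 2) := by
    have := abs_le.1 (hM p)
    exact Real.exp_le_exp.2 (by linarith)
  have hJ : 0 ≤ ∫ z in Box n L, f z * Real.exp (-V z) :=
    integral_nonneg fun z => mul_nonneg (h0 z) (Real.exp_pos _).le
  calc Real.exp (-(A * 2)) * Real.exp (-M / 2) * h₀ * Real.exp (-M / 2) * Z * muInt V L f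
      = Real.exp (-(A * 2)) * (Real.exp (-M / 2) *
          (h₀ * Real.exp (-M / 2) * ∫ z in Box n L, f z * Real.exp (-V z))) := by
        rw [muInt, ← hZdef]
        field_simp
    _ ≤ _ := by
        gcongr

/-! ### Geometric convergence -/

/-- Measurable periodic functions bounded by `B` with zero Gibbs average. -/
def Centred {n : ℕ} (V : En n → ℝ) (L B : ℝ) (f : En n → ℝ) : Prop :=
  Measurable f ∧ Per L f ∧ (∀ q, |f q| ≤ B) ∧ muInt V L f = 0

lemma Centred.iterate {n : ℕ} {L : ℝ} (hL : 0 < L) {V : En n → ℝ}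
    (hV : ContDiff ℝ (⊤ : ℕ∞) V) (hper : Per L V) {dt B : ℝ} (hdt : 0 < dt) {f : En n → ℝ}
    (hf : Centred V L B f) (k : ℕ) : Centred V L B ((Pmala V dt)^[k] f) := by
  obtain ⟨M, -, -, -, -, -, hM, -⟩ := potential_bounds hL hV hper
  induction k with
  | zero => exact hf
  | succ k ih =>
    obtain ⟨h1, h2, h3, h4⟩ := ih
    rw [Function.iterate_succ_apply']
    refine ⟨Pmala_measurable hV hdt h1, Pmala_per hper dt h2, Pmala_bound hV hdt h1 h3, ?_⟩
    rw [muInt, Pmala_invariant hL hV hper hM hdt h1 h2 h3]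
    exact h4

lemma muInt_nonneg {n : ℕ} (V : En n → ℝ) (L : ℝ) {f : En n → ℝ} (h0 : ∀ q, 0 ≤ f q) :
    0 ≤ muInt V L f :=
  mul_nonneg (inv_nonneg.2 (integral_nonneg fun _ => (Real.exp_pos _).le))
    (integral_nonneg fun q => mul_nonneg (h0 q) (Real.exp_pos _).le)

lemma Centred.neg {n : ℕ} {V : En n → ℝ} {L B : ℝ} {f : En n → ℝ} (hf : Centred V L B f) :
    Centred V L B fun q => -f q := by
  obtain ⟨h1, h2, h3, h4⟩ := hf
  refine ⟨h1.neg, fun q i => congrArg (-·) (h2 q i), fun q => by rw [abs_neg]; exact h3 q, ?_⟩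
  unfold muInt at h4 ⊢
  simp_rw [neg_mul, integral_neg, mul_neg, h4, neg_zero]

/-- Adding `B` to a centred function gives a function of Gibbs average `B`. -/
lemma Centred.muInt_add {n : ℕ} {L : ℝ} (hL : 0 < L) {V : En n → ℝ}
    (hV : ContDiff ℝ (⊤ : ℕ∞) V) (hper : Per L V) {B : ℝ} {f : En n → ℝ}
    (hf : Centred V L B f) : muInt V L (fun q => f q + B) = B := by
  obtain ⟨M, -, -, -, -, -, hM, -⟩ := potential_bounds hL hV hper
  obtain ⟨hi, hZ⟩ := gibbs_Z_pos (n := n) hL hV.continuous hM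
  obtain ⟨h1, h2, h3, h4⟩ := hf
  have hfi : IntegrableOn (fun q => f q * Real.exp (-V q)) (Box n L) :=
    Integrable.bdd_mul hi h1.aestronglyMeasurable (Filter.Eventually.of_forall h3)
  unfold muInt at h4 ⊢
  simp_rw [add_mul]
  rw [integral_add hfi (hi.const_mul B), mul_add, h4, integral_const_mul, zero_add]
  field_simp

/-- A Doeblin minorization by the invariant measure contracts centred functions. -/
lemma Centred.contract {n : ℕ} {L : ℝ} (hL : 0 < L) {V : En n → ℝ}
    (hV : ContDiff ℝ (⊤ : ℕ∞) V) (hper : Per L V) {dt B α : ℝ} {m : ℕ}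
    {f : En n → ℝ} (hf : Centred V L B f)
    (hdoeb : ∀ (g : En n → ℝ) (B' : ℝ), Measurable g → Per L g → (∀ q, |g q| ≤ B') →
      (∀ q, 0 ≤ g q) → ∀ q, α * muInt V L g ≤ (Pmala V dt)^[m] g q) (q : En n) :
    |(Pmala V dt)^[m] f q| ≤ (1 - α) * B := by
  have key : ∀ g : En n → ℝ, Centred V L B g → -((1 - α) * B) ≤ (Pmala V dt)^[m] g q := by
    intro g hg
    have hmu := hg.muInt_add hL hV hper
    obtain ⟨h1, h2, h3, h4⟩ := hg
    have h := hdoeb (fun q => g q + B) (2 * B) (h1.add_const B) (fun x i => congrArg (· + B) (h2 x i))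
      (fun x => by have := abs_le.1 (h3 x); rw [abs_le]; constructor <;> linarith)
      (fun x => by have := abs_le.1 (h3 x); linarith) q
    rw [hmu, Pmala_iter_add_const] at h
    linarith
  have h1 := key f hf
  have h2 := key _ hf.neg
  rw [Pmala_iter_neg] at h2
  exact abs_le.2 ⟨h1, by linarith⟩

theorem stmt5 (n : ℕ) (hn : 1 ≤ n) (L : ℝ) (hL : 0 < L)
    (V : En n → ℝ) (hV : ContDiff ℝ (⊤ : ℕ∞) V)
    (hper : ∀ (q : En n) (i : Fin n), V (q + L • EuclideanSpace.single i (1 : ℝ)) = V q) :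
    ∃ dts > (0 : ℝ), ∃ C > (0 : ℝ), ∃ lam > (0 : ℝ), ∀ dt : ℝ, 0 < dt → dt ≤ dts →
      ∀ (k : ℕ) (f : En n → ℝ), Measurable f →
        (∀ (q : En n) (i : Fin n), f (q + L • EuclideanSpace.single i (1 : ℝ)) = f q) →
        muInt V L f = 0 →
        ∀ B : ℝ, (∀ q, |f q| ≤ B) →
          ∀ q, |(Pmala V dt)^[k] f q| ≤ C * Real.exp (-lam * k * dt) * B := by
  obtain ⟨α₀, hα₀, hdoeb⟩ := doeblin hL hV hper
  have hα : 0 < min α₀ (1 / 2) := by positivity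
  set α := min α₀ (1 / 2) with hαdef
  have hα2 : α ≤ 1 / 2 := min_le_right _ _
  -- `lam` is chosen so that the contraction factor `1 - α` equals `e^{-2 lam}`, the number of
  -- steps `m` satisfying `m dt ≤ 2`
  set lam := -Real.log (1 - α) / 2 with hlam
  have hlog : Real.log (1 - α) < 0 := Real.log_neg (by linarith) (by linarith)
  have hlam0 : 0 < lam := by rw [hlam]; linarith
  have hα1 : 1 - α = Real.exp (-(2 * lam)) := by
    rw [hlam, show -(2 * (-Real.log (1 - α) / 2)) = Real.log (1 - α) by ring,
      Real.exp_log (by linarith)]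
  refine ⟨1, one_pos, Real.exp (2 * lam), Real.exp_pos _, lam, hlam0, ?_⟩
  intro dt hdt hdt1 k f hfm hfp hf0 B hB q
  obtain ⟨m, hm1, hm2⟩ : ∃ m : ℕ, 1 ≤ m * dt ∧ m * dt ≤ 2 := by
    refine ⟨⌈1 / dt⌉₊, ?_, ?_⟩
    · exact (div_le_iff₀ hdt).1 (Nat.le_ceil (1 / dt))
    · have h := (Nat.ceil_lt_add_one (show 0 ≤ 1 / dt by positivity)).le
      have h2 := mul_le_mul_of_nonneg_right h hdt.le
      have e : (1 / dt + 1) * dt = 1 + dt := by field_simp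
      linarith
  have hm0 : 0 < m := by
    rcases Nat.eq_zero_or_pos m with h | h
    · rw [h] at hm1; norm_num at hm1
    · exact h
  have hgood : Centred V L B f := ⟨hfm, hfp, hB, hf0⟩
  have hblock : ∀ j : ℕ, Centred V L ((1 - α) ^ j * B) ((Pmala V dt)^[m * j] f) := by
    intro j
    induction j with
    | zero => simpa using hgood
    | succ j ih =>
      rw [Nat.mul_succ, add_comm (m * j), Function.iterate_add_apply, pow_succ', mul_assoc]
      have h := ih.iterate hL hV hper hdt m
      refine ⟨h.1, h.2.1, ?_, h.2.2.2⟩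
      exact ih.contract hL hV hper (fun g B' hg hgp hgB hg0 x =>
        (mul_le_mul_of_nonneg_right (min_le_left _ _) (muInt_nonneg V L hg0)).trans
          (hdoeb dt hdt hdt1 m hm1 hm2 B' g hg hgp hgB hg0 x))
  have hk : k = k % m + m * (k / m) := (Nat.mod_add_div k m).symm
  have hfin := ((hblock (k / m)).iterate hL hV hper hdt (k % m)).2.2.1 q
  rw [← Function.iterate_add_apply, ← hk] at hfin
  refine hfin.trans ?_
  have hB0 : 0 ≤ B := (abs_nonneg _).trans (hB 0)
  gcongr
  rw [hα1, ← Real.exp_nat_mul, ← Real.exp_add]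
  refine Real.exp_le_exp.2 ?_
  have hkm : (k : ℝ) ≤ m * ((k / m : ℕ) + 1) := by
    have := (Nat.lt_mul_div_succ k hm0).le
    exact_mod_cast this
  have h1 : (k : ℝ) * dt ≤ 2 * ((k / m : ℕ) + 1) := by
    calc (k : ℝ) * dt ≤ m * ((k / m : ℕ) + 1) * dt := by gcongr
      _ = m * dt * ((k / m : ℕ) + 1) := by ring
      _ ≤ _ := by gcongr
  have h2 := mul_le_mul_of_nonneg_left h1 hlam0.le
  linarith
end
end
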